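/- Let f : ℝⁿ → ℝⁿ be locally Lipschitz, let x* satisfy f(x*) = 0, and assume f is semismooth and regular at x* (every V ∈ ∂f(x*) is invertible). Then there exists δ > 0 such that for every x₀ ∈ B_δ(x*) \ {x*}, every sequence {x_k} with x_{k+1} = x_k − V_k⁻¹ f(x_k) for some V_k ∈ ∂f(x_k) is well-defined, remains in B_δ(x*), and converges superlinearly to x*, i.e. x_k → x* and ‖x_{k+1} − x*‖ / ‖x_k − x*‖ → 0. -/

import Mathlib

/-!
The Clarke Jacobian is the convex hull of the cluster set of `fderiv ℝ f`. Near `x*` the map `f` is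
Lipschitz, so its derivatives stay in a compact ball; hence the hull is compact (by Carathéodory)
and depends on the base point in an upper hemicontinuous way. As inversion is continuous on the
open set of units, regularity at `x*` spreads to a bound `‖V⁻¹‖ ≤ C` for all `V ∈ ∂f(p)`, `p` near
`x*`. The error of a Newton step is `V⁻¹ (f x* - f p - V (x* - p))`, which semismoothness makes
`o(‖p - x*‖)`.
-/

open Metric Filter Topology

noncomputable section

/-- The Clarke generalized Jacobian of `f : ℝⁿ → ℝⁿ` at `p`: the convex hull of all limits
of Jacobians `Df(p_k)` along sequences of differentiability points `p_k → p`. -/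
def clarkeJacobian {n : ℕ} (f : EuclideanSpace ℝ (Fin n) → EuclideanSpace ℝ (Fin n))
    (p : EuclideanSpace ℝ (Fin n)) :
    Set (EuclideanSpace ℝ (Fin n) →L[ℝ] EuclideanSpace ℝ (Fin n)) :=
  convexHull ℝ {H | ∃ u : ℕ → EuclideanSpace ℝ (Fin n),
    (∀ k, DifferentiableAt ℝ f (u k)) ∧ Tendsto u atTop (𝓝 p) ∧
    Tendsto (fun k => fderiv ℝ f (u k)) atTop (𝓝 H)}

section ConvexHull

variable {E : Type*} [AddCommGroup E] [Module ℝ E] [FiniteDimensional ℝ E]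

theorem convexHull_eq_biUnion_image_stdSimplex_prod_pi (s : Set E) :
    convexHull ℝ s = ⋃ m ∈ Finset.range (Module.finrank ℝ E + 2),
      (fun q : (Fin m → ℝ) × (Fin m → E) => ∑ i, q.1 i • q.2 i) ''
        (stdSimplex ℝ (Fin m) ×ˢ Set.univ.pi fun _ => s) := by
  refine Set.Subset.antisymm (fun y hy => ?_) (Set.iUnion₂_subset fun m _ => ?_)
  · obtain ⟨ι, _, z, w, hz, hind, hw, hsum, rfl⟩ := eq_pos_convex_span_of_mem_convexHull hy
    have hcard : Fintype.card ι ≤ Module.finrank ℝ E + 1 :=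
      hind.card_le_finrank_succ.trans (Nat.add_le_add_right (Submodule.finrank_le _) 1)
    let e := (Fintype.equivFin ι).symm
    refine Set.mem_biUnion (Finset.mem_range.2 (Nat.lt_succ_of_le hcard))
      ⟨(w ∘ e, z ∘ e), ⟨⟨fun i => (hw (e i)).le, ?_⟩, fun i _ => hz ⟨e i, rfl⟩⟩, ?_⟩
    · exact (e.sum_comp w).trans hsum
    · exact e.sum_comp fun i => w i • z i
  · rintro _ ⟨⟨w, z⟩, ⟨hw, hz⟩, rfl⟩
    exact (convex_convexHull ℝ s).sum_mem (fun i _ => hw.1 i) hw.2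
      fun i _ => subset_convexHull ℝ s (hz i trivial)

theorem isCompact_convexHull [TopologicalSpace E] [ContinuousAdd E] [ContinuousSMul ℝ E]
    {s : Set E} (hs : IsCompact s) : IsCompact (convexHull ℝ s) := by
  rw [convexHull_eq_biUnion_image_stdSimplex_prod_pi]
  refine (Finset.range _).isCompact_biUnion fun m _ => ?_
  exact ((isCompact_stdSimplex ℝ (Fin m)).prod (isCompact_univ_pi fun _ => hs)).image (by fun_prop)

end ConvexHull

section ClusterSet

variable {X Y : Type*} [TopologicalSpace X] [TopologicalSpace Y]

/-- The cluster set of `g` at `p` relative to `s`: all cluster points of `g x` as `x → p` within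
`s`. -/
def clusterSet (g : X → Y) (s : Set X) (p : X) : Set Y :=
  {y | MapClusterPt y (𝓝[s] p) g}

variable {g : X → Y} {s : Set X} {p : X} {K T U : Set Y}

theorem isCompact_clusterSet [T2Space Y] (hK : IsCompact K) (hg : ∀ᶠ x in 𝓝[s] p, g x ∈ K) :
    IsCompact (clusterSet g s p) :=
  hK.of_isClosed_subset isClosed_setOfPred_clusterPt
    fun _ hy => hK.isClosed.mem_of_mapClusterPt hy hg

theorem eventually_mem_of_clusterSet_subset (hK : IsCompact K)
    (hg : ∀ᶠ x in 𝓝[s] p, g x ∈ K) (hU : IsOpen U) (h : clusterSet g s p ⊆ U) :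
    ∀ᶠ x in 𝓝[s] p, g x ∈ U :=
  hK.adherence_nhdset (f := map g (𝓝[s] p)) (le_principal_iff.2 hg) hU fun _ _ hy => h hy

theorem eventually_clusterSet_subset (hT : IsClosed T) (hg : ∀ᶠ x in 𝓝[s] p, g x ∈ T) :
    ∀ᶠ q in 𝓝 p, clusterSet g s q ⊆ T :=
  (eventually_nhds_nhdsWithin.2 hg).mono fun _ hq _ hy => hT.mem_of_mapClusterPt hy hq

theorem upperHemicontinuousAt_convexHull_clusterSet {G : Type*} [NormedAddCommGroup G]
    [NormedSpace ℝ G] [FiniteDimensional ℝ G] {g : X → G} {K : Set G} (hK : IsCompact K)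
    (hg : ∀ᶠ x in 𝓝[s] p, g x ∈ K) :
    UpperHemicontinuousAt (fun q => convexHull ℝ (clusterSet g s q)) p := by
  refine UpperHemicontinuousAt.of_forall_isOpen fun U hU hsub => ?_
  set H := convexHull ℝ (clusterSet g s p)
  obtain ⟨ε, hε, hεU⟩ :=
    (isCompact_convexHull (isCompact_clusterSet hK hg)).exists_cthickening_subset_open hU hsub
  have hmem : ∀ᶠ x in 𝓝[s] p, g x ∈ thickening ε H :=
    eventually_mem_of_clusterSet_subset hK hg isOpen_thickening
      ((subset_convexHull ℝ _).trans (self_subset_thickening hε _))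
  have hcl : ∀ᶠ q in 𝓝 p, clusterSet g s q ⊆ cthickening ε H :=
    eventually_clusterSet_subset isClosed_cthickening
      (hmem.mono fun _ hx => thickening_subset_cthickening _ _ hx)
  exact hcl.mono fun q hq =>
    (convexHull_min hq ((convex_convexHull ℝ _).cthickening ε)).trans hεU

end ClusterSet

section BouligandJacobian

variable {E F : Type*} [NormedAddCommGroup E] [NormedSpace ℝ E] [NormedAddCommGroup F]
  [NormedSpace ℝ F] {f : E → F} {p : E} {s : Set E} {K : NNReal}

/-- The Bouligand (or limiting) Jacobian of `f` at `p`: all limits of derivatives of `f` along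
sequences of differentiability points converging to `p`. On `ℝⁿ` its convex hull is definitionally
`clarkeJacobian f p`. -/
def bouligandJacobian (f : E → F) (p : E) : Set (E →L[ℝ] F) :=
  {H | ∃ u : ℕ → E, (∀ k, DifferentiableAt ℝ f (u k)) ∧ Tendsto u atTop (𝓝 p) ∧
    Tendsto (fun k => fderiv ℝ f (u k)) atTop (𝓝 H)}

theorem bouligandJacobian_eq_clusterSet (f : E → F) :
    bouligandJacobian f = clusterSet (fderiv ℝ f) {q | DifferentiableAt ℝ f q} := by
  ext p H
  constructor
  · rintro ⟨u, hdiff, hup, hH⟩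
    have hu : Tendsto u atTop (𝓝[{q | DifferentiableAt ℝ f q}] p) :=
      tendsto_nhdsWithin_iff.2 ⟨hup, Eventually.of_forall hdiff⟩
    exact MapClusterPt.of_comp hu hH.mapClusterPt
  · intro hH
    obtain ⟨u, hH, hu⟩ := MapClusterPt.exists_seq_tendsto hH
    obtain ⟨hup, hdiff⟩ := tendsto_nhdsWithin_iff.1 hu
    obtain ⟨N, hN⟩ := eventually_atTop.1 hdiff
    exact ⟨fun k => u (k + N), fun k => hN _ (Nat.le_add_left N k),
      hup.comp (tendsto_add_atTop_nat N), hH.comp (tendsto_add_atTop_nat N)⟩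

theorem eventually_fderiv_mem_closedBall (hs : s ∈ 𝓝 p) (hf : LipschitzOnWith K f s) :
    ∀ᶠ q in 𝓝 p, fderiv ℝ f q ∈ closedBall 0 (K : ℝ) :=
  (eventually_mem_nhds_iff.2 hs).mono fun _ hq =>
    mem_closedBall_zero_iff.2 (norm_fderiv_le_of_lipschitzOn ℝ hq hf)

variable [FiniteDimensional ℝ E] [FiniteDimensional ℝ F]

theorem isCompact_convexHull_bouligandJacobian (hs : s ∈ 𝓝 p) (hf : LipschitzOnWith K f s) :
    IsCompact (convexHull ℝ (bouligandJacobian f p)) := by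
  rw [bouligandJacobian_eq_clusterSet]
  exact isCompact_convexHull (isCompact_clusterSet (isCompact_closedBall 0 (K : ℝ))
    ((eventually_fderiv_mem_closedBall hs hf).filter_mono nhdsWithin_le_nhds))

theorem upperHemicontinuousAt_convexHull_bouligandJacobian (hs : s ∈ 𝓝 p)
    (hf : LipschitzOnWith K f s) :
    UpperHemicontinuousAt (fun q => convexHull ℝ (bouligandJacobian f q)) p := by
  rw [bouligandJacobian_eq_clusterSet]
  exact upperHemicontinuousAt_convexHull_clusterSet (isCompact_closedBall 0 (K : ℝ))
    ((eventually_fderiv_mem_closedBall hs hf).filter_mono nhdsWithin_le_nhds)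

end BouligandJacobian

section UniformInvertibility

variable {R : Type*} [NormedRing R] [HasSummableGeomSeries R]

theorem exists_eventually_nhdsSet_isUnit_and_norm_inverse_le {S : Set R} (hS : IsCompact S)
    (hunit : ∀ a ∈ S, IsUnit a) :
    ∃ C > 0, ∀ᶠ a in 𝓝ˢ S, IsUnit a ∧ ‖Ring.inverse a‖ ≤ C := by
  have hcont : ∀ a ∈ S, ContinuousAt Ring.inverse a := fun a ha => by
    obtain ⟨u, rfl⟩ := hunit a ha
    exact NormedRing.inverse_continuousAt u
  obtain ⟨C, hC, hbound⟩ := (hS.image_of_continuousOn fun a ha =>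
    (hcont a ha).continuousWithinAt).isBounded.exists_pos_norm_lt
  refine ⟨C, hC, eventually_nhdsSet_iff_forall.2 fun a ha => ?_⟩
  filter_upwards [Units.isOpen.mem_nhds (hunit a ha),
    (hcont a ha).norm.eventually_lt_const (hbound _ ⟨a, ha, rfl⟩)] with b hb hlt
  exact ⟨hb, hlt.le⟩

theorem exists_eventually_norm_inverse_le_of_upperHemicontinuousAt {X : Type*} [TopologicalSpace X]
    {J : X → Set R} {p : X} (hJ : UpperHemicontinuousAt J p) (hcpt : IsCompact (J p))
    (hunit : ∀ a ∈ J p, IsUnit a) :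
    ∃ C > 0, ∀ᶠ q in 𝓝 p, ∀ a ∈ J q, IsUnit a ∧ ‖Ring.inverse a‖ ≤ C := by
  obtain ⟨C, hC, hbound⟩ := exists_eventually_nhdsSet_isUnit_and_norm_inverse_le hcpt hunit
  refine ⟨C, hC, (upperHemicontinuousAt_iff.1 hJ _ hbound).mono fun q hq a ha => ?_⟩
  exact subset_of_mem_nhdsSet hq ha

end UniformInvertibility

section ContractingSequence

variable {E : Type*} [SeminormedAddCommGroup E] {x : ℕ → E} {a : E} {c δ : ℝ}

theorem forall_mem_ball_of_norm_succ_sub_le (hc : c ≤ 1) (h0 : x 0 ∈ ball a δ)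
    (h : ∀ k, x k ∈ ball a δ → ‖x (k + 1) - a‖ ≤ c * ‖x k - a‖) (k : ℕ) : x k ∈ ball a δ := by
  induction k with
  | zero => exact h0
  | succ k ih =>
    rw [mem_ball_iff_norm]
    exact (h k ih).trans_lt ((mul_le_of_le_one_left (norm_nonneg _) hc).trans_lt
      (mem_ball_iff_norm.1 ih))

theorem tendsto_of_norm_succ_sub_le (hc₀ : 0 ≤ c) (hc₁ : c < 1)
    (h : ∀ k, ‖x (k + 1) - a‖ ≤ c * ‖x k - a‖) : Tendsto x atTop (𝓝 a) := by
  have hgeom (k : ℕ) : ‖x k - a‖ ≤ c ^ k * ‖x 0 - a‖ :=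
    le_geom (u := fun k => ‖x k - a‖) hc₀ k fun j _ => h j
  refine tendsto_iff_norm_sub_tendsto_zero.2 (squeeze_zero (fun _ => norm_nonneg _) hgeom ?_)
  simpa only [zero_mul] using
    (tendsto_pow_atTop_nhds_zero_of_lt_one hc₀ hc₁).mul_const ‖x 0 - a‖

end ContractingSequence

section Newton

variable {𝕜 E : Type*} [NontriviallyNormedField 𝕜] [SeminormedAddCommGroup E] [NormedSpace 𝕜 E]
  {f : E → E} {J : E → Set (E →L[𝕜] E)} {p xs : E} {C : ℝ}

theorem norm_newton_step_sub_le {V : E →L[𝕜] E} (hV : IsUnit V) (hxs : f xs = 0) :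
    ‖p - Ring.inverse V (f p) - xs‖ ≤ ‖Ring.inverse V‖ * ‖f xs - f p - V (xs - p)‖ := by
  have hcancel (w : E) : Ring.inverse V (V w) = w :=
    DFunLike.congr_fun (Ring.inverse_mul_cancel V hV) w
  have herror : p - Ring.inverse V (f p) - xs = Ring.inverse V (f xs - f p - V (xs - p)) := by
    rw [map_sub, hcancel, hxs, zero_sub, map_neg]
    abel
  rw [herror]
  exact (Ring.inverse V).le_opNorm _

theorem eventually_norm_newton_step_sub_le (hxs : f xs = 0) (hC : 0 < C)
    (hinv : ∀ᶠ p in 𝓝 xs, ∀ V ∈ J p, IsUnit V ∧ ‖Ring.inverse V‖ ≤ C)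
    (hss : ∀ ε > (0 : ℝ), ∀ᶠ p in 𝓝 xs, ∀ V ∈ J p,
      ‖f xs - f p - V (xs - p)‖ ≤ ε * ‖p - xs‖) {ε : ℝ} (hε : 0 < ε) :
    ∀ᶠ p in 𝓝 xs, ∀ V ∈ J p, ‖p - Ring.inverse V (f p) - xs‖ ≤ ε * ‖p - xs‖ := by
  filter_upwards [hinv, hss (ε / C) (div_pos hε hC)] with p hinv hss V hV
  obtain ⟨hunit, hnorm⟩ := hinv V hV
  calc ‖p - Ring.inverse V (f p) - xs‖
      ≤ ‖Ring.inverse V‖ * ‖f xs - f p - V (xs - p)‖ := norm_newton_step_sub_le hunit hxs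
    _ ≤ C * (ε / C * ‖p - xs‖) := by gcongr; exact hss V hV
    _ = ε * ‖p - xs‖ := by field_simp

theorem newton_superlinear_of_norm_inverse_le (hxs : f xs = 0) (hC : 0 < C)
    (hinv : ∀ᶠ p in 𝓝 xs, ∀ V ∈ J p, IsUnit V ∧ ‖Ring.inverse V‖ ≤ C)
    (hss : ∀ ε > (0 : ℝ), ∀ᶠ p in 𝓝 xs, ∀ V ∈ J p,
      ‖f xs - f p - V (xs - p)‖ ≤ ε * ‖p - xs‖) :
    ∃ δ > (0 : ℝ), ∀ (x : ℕ → E) (V : ℕ → E →L[𝕜] E), x 0 ∈ ball xs δ →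
      (∀ k, V k ∈ J (x k)) → (∀ k, x (k + 1) = x k - Ring.inverse (V k) (f (x k))) →
      (∀ k, IsUnit (V k)) ∧ (∀ k, x k ∈ ball xs δ) ∧ Tendsto x atTop (𝓝 xs) ∧
      Tendsto (fun k => ‖x (k + 1) - xs‖ / ‖x k - xs‖) atTop (𝓝 0) := by
  have hstep {ε : ℝ} (hε : 0 < ε) := eventually_norm_newton_step_sub_le hxs hC hinv hss hε
  obtain ⟨δ, hδ, hball⟩ := eventually_nhds_iff_ball.1 (hinv.and (hstep one_half_pos))
  refine ⟨δ, hδ, fun x V h0 hV hx => ?_⟩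
  have hcontract (k : ℕ) (hk : x k ∈ ball xs δ) : ‖x (k + 1) - xs‖ ≤ 1 / 2 * ‖x k - xs‖ := by
    rw [hx k]
    exact (hball _ hk).2 _ (hV k)
  have hmem := forall_mem_ball_of_norm_succ_sub_le one_half_lt_one.le h0 hcontract
  have hlim : Tendsto x atTop (𝓝 xs) :=
    tendsto_of_norm_succ_sub_le one_half_pos.le one_half_lt_one fun k => hcontract k (hmem k)
  have hlittleO : (fun k => x (k + 1) - xs) =o[atTop] fun k => x k - xs := by
    refine Asymptotics.isLittleO_iff.2 fun ε hε => ?_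
    filter_upwards [hlim.eventually (hstep hε)] with k hk
    rw [hx k]
    exact hk _ (hV k)
  exact ⟨fun k => ((hball _ (hmem k)).1 _ (hV k)).1, hmem, hlim,
    hlittleO.norm_norm.tendsto_div_nhds_zero⟩

end Newton

theorem newton_semismooth_superlinear_general {E : Type*} [NormedAddCommGroup E]
    [NormedSpace ℝ E] [FiniteDimensional ℝ E] {f : E → E} {xs : E} {s : Set E} {K : NNReal}
    (hs : s ∈ 𝓝 xs) (hf : LipschitzOnWith K f s) (hxs : f xs = 0)
    (hss : ∀ ε > (0 : ℝ), ∀ᶠ p in 𝓝 xs, ∀ V ∈ convexHull ℝ (bouligandJacobian f p),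
      ‖f xs - f p - V (xs - p)‖ ≤ ε * ‖p - xs‖)
    (hreg : ∀ V ∈ convexHull ℝ (bouligandJacobian f xs), IsUnit V) :
    ∃ δ > (0 : ℝ), ∀ (x : ℕ → E) (V : ℕ → E →L[ℝ] E), x 0 ∈ ball xs δ →
      (∀ k, V k ∈ convexHull ℝ (bouligandJacobian f (x k))) →
      (∀ k, x (k + 1) = x k - Ring.inverse (V k) (f (x k))) →
      (∀ k, IsUnit (V k)) ∧ (∀ k, x k ∈ ball xs δ) ∧ Tendsto x atTop (𝓝 xs) ∧
      Tendsto (fun k => ‖x (k + 1) - xs‖ / ‖x k - xs‖) atTop (𝓝 0) := by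
  have : CompleteSpace E := FiniteDimensional.complete ℝ E
  obtain ⟨C, hC, hinv⟩ := exists_eventually_norm_inverse_le_of_upperHemicontinuousAt
    (J := fun q => convexHull ℝ (bouligandJacobian f q))
    (upperHemicontinuousAt_convexHull_bouligandJacobian hs hf)
    (isCompact_convexHull_bouligandJacobian hs hf) hreg
  exact newton_superlinear_of_norm_inverse_le hxs hC hinv hss

/-- Superlinear local convergence of the Newton method for a semismooth map that is regular
at a zero `x*` (Euclidean case of the first part of Theorem 4.3). -/
theorem newton_semismooth_superlinear {n : ℕ}
    (f : EuclideanSpace ℝ (Fin n) → EuclideanSpace ℝ (Fin n)) (hf : LocallyLipschitz f)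
    (xs : EuclideanSpace ℝ (Fin n)) (hxs : f xs = 0)
    -- `f` is directionally differentiable near `x*`:
    (hdir : ∃ δ₀ > (0 : ℝ), ∀ p ∈ ball xs δ₀, ∀ v : EuclideanSpace ℝ (Fin n),
      ∃ d : EuclideanSpace ℝ (Fin n),
        Tendsto (fun t : ℝ => t⁻¹ • (f (p + t • v) - f p)) (𝓝[>] (0 : ℝ)) (𝓝 d))
    -- semismoothness estimate at `x*`:
    (hss : ∀ ε > (0 : ℝ), ∃ δ > (0 : ℝ), ∀ p ∈ ball xs δ, ∀ V ∈ clarkeJacobian f p,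
      ‖f xs - f p - V (xs - p)‖ ≤ ε * ‖p - xs‖)
    -- regularity at `x*`:
    (hreg : ∀ V ∈ clarkeJacobian f xs, IsUnit V) :
    ∃ δ > (0 : ℝ), ∀ x₀ ∈ ball xs δ, x₀ ≠ xs →
      ∀ (x : ℕ → EuclideanSpace ℝ (Fin n))
        (V : ℕ → (EuclideanSpace ℝ (Fin n) →L[ℝ] EuclideanSpace ℝ (Fin n))),
        x 0 = x₀ → (∀ k, V k ∈ clarkeJacobian f (x k)) →
        (∀ k, x (k + 1) = x k - Ring.inverse (V k) (f (x k))) →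
        (∀ k, IsUnit (V k)) ∧ (∀ k, x k ∈ ball xs δ) ∧
        Tendsto x atTop (𝓝 xs) ∧
        Tendsto (fun k => ‖x (k + 1) - xs‖ / ‖x k - xs‖) atTop (𝓝 0) := by
  obtain ⟨K, s, hs, hlip⟩ := hf xs
  obtain ⟨δ, hδ, h⟩ := newton_semismooth_superlinear_general hs hlip hxs
    (fun ε hε => eventually_nhds_iff_ball.2 (hss ε hε)) hreg
  exact ⟨δ, hδ, fun _ hx₀ _ x V h0 => h x V (h0 ▸ hx₀)⟩
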